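/- arXiv:1608.01590 — 4 statements merged into one kernel-verified Lean document; each statement's English description precedes it below -/
import Mathlib

section
/- Let N ≥ 1. For each i ∈ {1,…,N} let f_i : ℝ^{n_i} × ℝ^{m_i} × ℝ^{p_i} → ℝ^{n_i}, h_{1i} : ℝ^{n_i} → ℝ^{q_{1i}}, h_{2i} : ℝ^{n_i} → ℝ^{q_{2i}} be the dynamics and output maps of a control subsystem Σ_i, and let f̂_i : ℝ^{n̂_i} × ℝ^{m̂_i} × ℝ^{p̂_i} → ℝ^{n̂_i}, ĥ_{1i} : ℝ^{n̂_i} → ℝ^{q_{1i}}, ĥ_{2i} : ℝ^{n̂_i} → ℝ^{q̂_{2i}} be those of an abstraction Σ̂_i. Suppose each continuously differentiable V_i : ℝ^{n_i} × ℝ^{n̂_i} → ℝ_{≥0} is a storage function from Σ̂_i to Σ_i with associated α_i, η_i ∈ K∞, ρ_{i,ext} ∈ K∞ ∪ {0}, matrices W_i ∈ ℝ^{r_i×p_i}, Ŵ_i ∈ ℝ^{r_i×p̂_i}, H_i ∈ ℝ^{q_{2i}×q̂_{2i}}, and symmetric X_i ∈ ℝ^{(r_i+q_{2i})×(r_i+q_{2i})}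 with conformal blocks X_i^{11}, X_i^{12}, X_i^{21}, X_i^{22} and X_i^{22} ⪯ 0. Set p = Σ_i p_i, p̂ = Σ_i p̂_i, q̃ = Σ_i q_{2i}, q̂̃ = Σ_i q̂_{2i}, W = diag(W_1,…,W_N), Ŵ = diag(Ŵ_1,…,Ŵ_N), H = diag(H_1,…,H_N), and let X(μ_1X_1,…,μ_NX_N) denote the symmetric matrix whose (1,1), (1,2), (2,1), (2,2) blocks are diag(μ_1X_1^{11},…,μ_NX_N^{11}), diag(μ_1X_1^{12},…,μ_NX_N^{12}), diag(μ_1X_1^{21},…,μ_NX_N^{21}), diag(μ_1X_1^{22},…,μ_NX_N^{22}). Suppose there exist μ_1,…,μ_N > 0 and coupling matrices M ∈ ℝ^{p×q̃}, M̂ ∈ ℝ^{p̂×q̂̃} such that [WM; I_{q̃}]ᵀ X(μ_1X_1,…,μ_NX_N) [WM; I_{q̃}] ⪯ 0 and WMH = ŴM̂. Define the interconnected dynamics f(x,u) = [f_1(x_1,u_1,w_1); … ; f_N(x_N,u_N,w_N)] with [w_1;…;w_N] = M[h_{21}(x_1);…;h_{2N}(x_N)] and output h(x) = [h_{11}(x_1);…;h_{1N}(x_N)],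 and analogously f̂(x̂,û), ĥ(x̂) using M̂ and the hatted maps. Then V(x,x̂) := Σ_{i=1}^N μ_i V_i(x_i,x̂_i) is a simulation function from the interconnection of the abstractions to the interconnection of the concrete subsystems: there exist α, η ∈ K∞ and ρ_ext ∈ K∞ ∪ {0} such that α(‖h(x) − ĥ(x̂)‖) ≤ V(x,x̂) for all x, x̂, and for every x, x̂ and every û there exists u with ∇V(x,x̂)ᵀ[f(x,u); f̂(x̂,û)] ≤ −η(V(x,x̂)) + ρ_ext(‖û‖). -/
open Matrix

/-- The Euclidean norm of a finitely indexed real vector. -/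
noncomputable def euclNorm {ι : Type*} [Fintype ι] (x : ι → ℝ) : ℝ :=
  Real.sqrt (∑ i, (x i) ^ 2)

/-- A class `K∞` function: continuous and strictly increasing on `[0,∞)`, vanishing at `0`,
and tending to `∞`. -/
def IsKInf (γ : ℝ → ℝ) : Prop :=
  ContinuousOn γ (Set.Ici 0) ∧ StrictMonoOn γ (Set.Ici 0) ∧ γ 0 = 0 ∧
    Filter.Tendsto γ Filter.atTop Filter.atTop

/-!
Along the interconnection, condition (6), `W M H = Ŵ M̂`, turns the internal mismatch `W w - Ŵ ŵ`
into `W M (y - H ŷ)`, where `y` and `ŷ` are the stacked internal outputs. The `μ`-weighted sum of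
the supply rates is therefore the quadratic form of `X(μ₁X₁, …, μ_N X_N)` at `[W M; I] (y - H ŷ)`,
which is nonpositive by condition (5). It remains to merge the comparison functions. Some `aᵢ` is
at least the average of them all, so `minᵢ γᵢ(s / N)` at `s = ∑ aᵢ` bounds `∑ γᵢ(aᵢ)` from below;
and `∑ γᵢ`, evaluated at an upper bound of the `aᵢ`, bounds it from above.
-/

namespace IsKInf

variable {γ δ : ℝ → ℝ}

theorem monotoneOn (hγ : IsKInf γ) : MonotoneOn γ (Set.Ici 0) :=
  hγ.2.1.monotoneOn

theorem nonneg (hγ : IsKInf γ) {s : ℝ} (hs : 0 ≤ s) : 0 ≤ γ s :=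
  hγ.2.2.1.ge.trans (hγ.monotoneOn Set.self_mem_Ici hs hs)

theorem const_mul (hγ : IsKInf γ) {c : ℝ} (hc : 0 < c) : IsKInf fun s => c * γ s := by
  obtain ⟨hcont, hmono, hzero, htop⟩ := hγ
  exact ⟨continuousOn_const.mul hcont,
    fun a ha b hb hab => mul_lt_mul_of_pos_left (hmono ha hb hab) hc,
    by simp [hzero], htop.const_mul_atTop hc⟩

theorem comp_div_const (hγ : IsKInf γ) {c : ℝ} (hc : 0 < c) : IsKInf fun s => γ (s / c) := by
  obtain ⟨hcont, hmono, hzero, htop⟩ := hγ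
  have hmaps : Set.MapsTo (· / c) (Set.Ici (0 : ℝ)) (Set.Ici 0) := fun s hs => div_nonneg hs hc.le
  exact ⟨hcont.comp (by fun_prop) hmaps,
    fun a ha b hb hab => hmono (hmaps ha) (hmaps hb) (div_lt_div_of_pos_right hab hc),
    by simp [hzero], htop.comp (Filter.tendsto_id.atTop_div_const hc)⟩

theorem add (hγ : IsKInf γ) (hδ : IsKInf δ) : IsKInf (γ + δ) := by
  obtain ⟨hcont, hmono, hzero, htop⟩ := hγ
  obtain ⟨hcont', hmono', hzero', htop'⟩ := hδ
  exact ⟨hcont.add hcont', hmono.add hmono', by simp [hzero, hzero'], htop.atTop_add_atTop htop'⟩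

theorem finset_inf' {ι : Type*} {s : Finset ι} (hs : s.Nonempty) {γ : ι → ℝ → ℝ}
    (hγ : ∀ i ∈ s, IsKInf (γ i)) : IsKInf fun t => s.inf' hs fun i => γ i t := by
  refine ⟨ContinuousOn.finset_inf'_apply hs fun i hi => (hγ i hi).1, ?_, ?_, ?_⟩
  · intro a ha b hb hab
    refine (Finset.lt_inf'_iff hs).2 fun i hi => ?_
    exact (Finset.inf'_le _ hi).trans_lt ((hγ i hi).2.1 ha hb hab)
  · exact (Finset.inf'_congr hs rfl fun i hi => (hγ i hi).2.2.1).trans (Finset.inf'_const hs 0)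
  · refine Filter.tendsto_atTop.2 fun b => ?_
    have hlarge : ∀ᶠ t in Filter.atTop, ∀ i ∈ s, b ≤ γ i t :=
      (Filter.eventually_all_finset s).2 fun i hi => (hγ i hi).2.2.2.eventually_ge_atTop b
    exact hlarge.mono fun t ht => Finset.le_inf' hs _ ht

theorem exists_map_sum_le_sum {ι : Type*} [Fintype ι] [Nonempty ι] {γ : ι → ℝ → ℝ}
    (hγ : ∀ i, IsKInf (γ i)) :
    ∃ δ, IsKInf δ ∧ ∀ a : ι → ℝ, (∀ i, 0 ≤ a i) → δ (∑ i, a i) ≤ ∑ i, γ i (a i) := by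
  have hcard : (0 : ℝ) < Fintype.card ι := Nat.cast_pos.2 Fintype.card_pos
  refine ⟨_, finset_inf' Finset.univ_nonempty fun i _ => (hγ i).comp_div_const hcard,
    fun a ha => ?_⟩
  have hmean : 0 ≤ (∑ i, a i) / Fintype.card ι :=
    div_nonneg (Finset.sum_nonneg fun i _ => ha i) hcard.le
  obtain ⟨i, -, hi⟩ : ∃ i ∈ Finset.univ, (∑ j, a j) / Fintype.card ι ≤ a i := by
    refine Finset.exists_le_of_sum_le Finset.univ_nonempty ?_
    rw [Finset.sum_const, Finset.card_univ, nsmul_eq_mul, mul_div_cancel₀ _ hcard.ne']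
  calc Finset.univ.inf' _ (fun j => γ j ((∑ k, a k) / Fintype.card ι))
      ≤ γ i ((∑ k, a k) / Fintype.card ι) := Finset.inf'_le _ (Finset.mem_univ i)
    _ ≤ γ i (a i) := (hγ i).monotoneOn hmean (ha i) hi
    _ ≤ ∑ j, γ j (a j) :=
      Finset.single_le_sum (fun j _ => (hγ j).nonneg (ha j)) (Finset.mem_univ i)

theorem exists_map_sum_mul_le_sum_mul {ι : Type*} [Fintype ι] [Nonempty ι] {γ : ι → ℝ → ℝ}
    (hγ : ∀ i, IsKInf (γ i)) {μ : ι → ℝ} (hμ : ∀ i, 0 < μ i) :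
    ∃ δ, IsKInf δ ∧ ∀ a : ι → ℝ, (∀ i, 0 ≤ a i) →
      δ (∑ i, μ i * a i) ≤ ∑ i, μ i * γ i (a i) := by
  obtain ⟨δ, hδ, hle⟩ :=
    exists_map_sum_le_sum fun i => ((hγ i).comp_div_const (hμ i)).const_mul (hμ i)
  refine ⟨δ, hδ, fun a ha => ?_⟩
  simpa only [mul_div_cancel_left₀ _ (hμ _).ne'] using
    hle (fun i => μ i * a i) fun i => mul_nonneg (hμ i).le (ha i)

end IsKInf

/-- The class `K∞ ∪ {0}` of external gains. -/
def IsKInfOrZero (γ : ℝ → ℝ) : Prop :=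
  IsKInf γ ∨ γ = 0

namespace IsKInfOrZero

variable {γ δ : ℝ → ℝ}

theorem monotoneOn (hγ : IsKInfOrZero γ) : MonotoneOn γ (Set.Ici 0) := by
  rcases hγ with hγ | rfl
  · exact hγ.monotoneOn
  · exact monotoneOn_const

theorem const_mul (hγ : IsKInfOrZero γ) {c : ℝ} (hc : 0 < c) :
    IsKInfOrZero fun s => c * γ s := by
  rcases hγ with hγ | rfl
  · exact .inl (hγ.const_mul hc)
  · exact .inr (funext fun _ => mul_zero c)

theorem add (hγ : IsKInfOrZero γ) (hδ : IsKInfOrZero δ) : IsKInfOrZero (γ + δ) := by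
  rcases hγ with hγ | rfl
  · rcases hδ with hδ | rfl
    · exact .inl (hγ.add hδ)
    · exact .inl (by rwa [add_zero])
  · rwa [zero_add]

theorem sum {ι : Type*} {s : Finset ι} {γ : ι → ℝ → ℝ} (hγ : ∀ i ∈ s, IsKInfOrZero (γ i)) :
    IsKInfOrZero (∑ i ∈ s, γ i) :=
  Finset.sum_induction γ IsKInfOrZero (fun _ _ => add) (.inr rfl) hγ

theorem exists_sum_le_map {ι : Type*} [Fintype ι] {γ : ι → ℝ → ℝ}
    (hγ : ∀ i, IsKInfOrZero (γ i)) :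
    ∃ δ, IsKInfOrZero δ ∧ ∀ (a : ι → ℝ) (s : ℝ), (∀ i, 0 ≤ a i) → (∀ i, a i ≤ s) →
      ∑ i, γ i (a i) ≤ δ s := by
  refine ⟨∑ i, γ i, sum fun i _ => hγ i, fun a s ha has => ?_⟩
  rw [Finset.sum_apply]
  exact Finset.sum_le_sum fun i _ => (hγ i).monotoneOn (ha i) ((ha i).trans (has i)) (has i)

end IsKInfOrZero

section Stack

variable {ι : Type*} {κ ν : ι → Type*} {R : Type*}

/-- The stacked vector `[y₁; …; y_N]`, indexed by the disjoint union of the index types of its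
blocks as in `Matrix.blockDiagonal'`. -/
def stack (y : ∀ i, κ i → R) : (Σ i, κ i) → R :=
  fun a => y a.1 a.2

/-- The `i`-th block of a stacked vector; inverse to `stack`. -/
def block (v : (Σ i, κ i) → R) (i : ι) : κ i → R :=
  fun j => v ⟨i, j⟩

theorem block_add [Add R] (v w : (Σ i, κ i) → R) (i : ι) :
    block (v + w) i = block v i + block w i :=
  rfl

theorem dotProduct_eq_sum_block [Fintype ι] [∀ i, Fintype (κ i)] [NonUnitalNonAssocSemiring R]
    (v w : (Σ i, κ i) → R) : v ⬝ᵥ w = ∑ i, block v i ⬝ᵥ block w i :=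
  Fintype.sum_sigma _

theorem block_blockDiagonal'_mulVec [Fintype ι] [DecidableEq ι] [∀ i, Fintype (ν i)]
    [NonUnitalNonAssocSemiring R] (B : ∀ i, Matrix (κ i) (ν i) R) (v : (Σ i, ν i) → R) (i : ι) :
    block (blockDiagonal' B *ᵥ v) i = B i *ᵥ block v i := by
  ext j
  simp only [block, mulVec, dotProduct, Fintype.sum_sigma]
  rw [Fintype.sum_eq_single i fun i' hi' => ?_]
  · simp only [blockDiagonal'_apply_eq]
  · exact Finset.sum_eq_zero fun k _ => by rw [blockDiagonal'_apply_ne _ _ _ hi'.symm, zero_mul]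

end Stack

theorem euclNorm_nonneg {κ : Type*} [Fintype κ] (x : κ → ℝ) : 0 ≤ euclNorm x :=
  Real.sqrt_nonneg _

theorem euclNorm_sq {κ : Type*} [Fintype κ] (x : κ → ℝ) : euclNorm x ^ 2 = ∑ i, x i ^ 2 :=
  Real.sq_sqrt (Finset.sum_nonneg fun _ _ => sq_nonneg _)

section EuclNormStack

variable {ι : Type*} [Fintype ι] {κ : ι → Type*} [∀ i, Fintype (κ i)]

theorem euclNorm_stack_sq (y : ∀ i, κ i → ℝ) :
    euclNorm (stack y) ^ 2 = ∑ i, euclNorm (y i) ^ 2 := by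
  simp only [euclNorm_sq, Fintype.sum_sigma, stack]

theorem euclNorm_stack_le_sum (y : ∀ i, κ i → ℝ) :
    euclNorm (stack y) ≤ ∑ i, euclNorm (y i) := by
  refine le_of_sq_le_sq ?_ (Finset.sum_nonneg fun i _ => euclNorm_nonneg (y i))
  rw [euclNorm_stack_sq]
  exact Finset.sum_sq_le_sq_sum_of_nonneg fun i _ => euclNorm_nonneg (y i)

theorem euclNorm_block_le (v : (Σ i, κ i) → ℝ) (i : ι) : euclNorm (block v i) ≤ euclNorm v := by
  refine le_of_sq_le_sq ?_ (euclNorm_nonneg v)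
  calc euclNorm (block v i) ^ 2
      ≤ ∑ j, euclNorm (block v j) ^ 2 :=
        Finset.single_le_sum (f := fun j => euclNorm (block v j) ^ 2)
          (fun j _ => sq_nonneg _) (Finset.mem_univ i)
    _ = euclNorm v ^ 2 := (euclNorm_stack_sq (block v)).symm

end EuclNormStack

section SupplyRate

/-- The quadratic supply rate `[a; b]ᵀ X [a; b]`. -/
def supplyRate {κ ν : Type*} [Fintype κ] [Fintype ν] (X : Matrix (κ ⊕ ν) (κ ⊕ ν) ℝ)
    (a : κ → ℝ) (b : ν → ℝ) : ℝ :=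
  Sum.elim a b ⬝ᵥ X *ᵥ Sum.elim a b

theorem supplyRate_fromBlocks {κ ν : Type*} [Fintype κ] [Fintype ν] (A : Matrix κ κ ℝ)
    (B : Matrix κ ν ℝ) (C : Matrix ν κ ℝ) (D : Matrix ν ν ℝ) (a : κ → ℝ) (b : ν → ℝ) :
    supplyRate (fromBlocks A B C D) a b =
      a ⬝ᵥ (A *ᵥ a + B *ᵥ b) + b ⬝ᵥ (C *ᵥ a + D *ᵥ b) := by
  rw [supplyRate, fromBlocks_mulVec, sumElim_dotProduct_sumElim, Sum.elim_comp_inl,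
    Sum.elim_comp_inr]

/-- The linear matrix inequality `[K; I]ᵀ X [K; I] ⪯ 0`, saying that the supply rate of `X` is
nonpositive at every `[K b; b]`. -/
def SatisfiesCouplingLMI {κ ν : Type*} [Fintype κ] [Fintype ν] [DecidableEq ν] (K : Matrix κ ν ℝ)
    (X : Matrix (κ ⊕ ν) (κ ⊕ ν) ℝ) : Prop :=
  (-((fromRows K (1 : Matrix ν ν ℝ))ᵀ * X * fromRows K (1 : Matrix ν ν ℝ))).PosSemidef

theorem SatisfiesCouplingLMI.supplyRate_mulVec_self_nonpos {κ ν : Type*} [Fintype κ] [Fintype ν]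
    [DecidableEq ν] {K : Matrix κ ν ℝ} {X : Matrix (κ ⊕ ν) (κ ⊕ ν) ℝ}
    (hX : SatisfiesCouplingLMI K X) (b : ν → ℝ) : supplyRate X (K *ᵥ b) b ≤ 0 := by
  have hstack : fromRows K (1 : Matrix ν ν ℝ) *ᵥ b = Sum.elim (K *ᵥ b) b := by
    rw [fromRows_mulVec, one_mulVec]
  have hnonneg := hX.dotProduct_mulVec_nonneg b
  rw [star_trivial, neg_mulVec, dotProduct_neg, ← mulVec_mulVec, ← mulVec_mulVec,
    dotProduct_transpose_mulVec, hstack, dotProduct_comm] at hnonneg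
  exact neg_nonneg.1 hnonneg

variable {ι : Type*} [Fintype ι] [DecidableEq ι] {κ ν : ι → Type*}

/-- The matrix `X(μ₁X₁, …, μ_N X_N)`, whose four blocks are the block diagonal matrices of the
corresponding blocks of the `μᵢXᵢ`. -/
def weightedBlockMatrix (μ : ι → ℝ) (X : ∀ i, Matrix (κ i ⊕ ν i) (κ i ⊕ ν i) ℝ) :
    Matrix ((Σ i, κ i) ⊕ Σ i, ν i) ((Σ i, κ i) ⊕ Σ i, ν i) ℝ :=
  fromBlocks
    (blockDiagonal' fun i => μ i • (X i).toBlocks₁₁)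
    (blockDiagonal' fun i => μ i • (X i).toBlocks₁₂)
    (blockDiagonal' fun i => μ i • (X i).toBlocks₂₁)
    (blockDiagonal' fun i => μ i • (X i).toBlocks₂₂)

theorem supplyRate_weightedBlockMatrix [∀ i, Fintype (κ i)] [∀ i, Fintype (ν i)] (μ : ι → ℝ)
    (X : ∀ i, Matrix (κ i ⊕ ν i) (κ i ⊕ ν i) ℝ) (a : (Σ i, κ i) → ℝ) (b : (Σ i, ν i) → ℝ) :
    supplyRate (weightedBlockMatrix μ X) a b =
      ∑ i, μ i * supplyRate (X i) (block a i) (block b i) := by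
  have hterm (i : ι) : μ i * supplyRate (X i) (block a i) (block b i) =
      block a i ⬝ᵥ ((μ i • (X i).toBlocks₁₁) *ᵥ block a i +
        (μ i • (X i).toBlocks₁₂) *ᵥ block b i) +
      block b i ⬝ᵥ ((μ i • (X i).toBlocks₂₁) *ᵥ block a i +
        (μ i • (X i).toBlocks₂₂) *ᵥ block b i) := by
    conv_lhs => rw [← fromBlocks_toBlocks (X i), supplyRate_fromBlocks]
    simp only [smul_mulVec, ← smul_add, dotProduct_smul, smul_eq_mul, mul_add]
  simp only [hterm, weightedBlockMatrix, supplyRate_fromBlocks, dotProduct_eq_sum_block, block_add,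
    block_blockDiagonal'_mulVec, Finset.sum_add_distrib]

end SupplyRate

theorem mulVec_sub_mulVec_eq_of_mul_eq {R κ ν ν' ω ω' : Type*} [Ring R] [Fintype ν] [Fintype ν']
    [Fintype ω] [Fintype ω'] {W : Matrix κ ν R} {Wh : Matrix κ ν' R} {M : Matrix ν ω R}
    {Mh : Matrix ν' ω' R} {H : Matrix ω ω' R} (hWMH : W * M * H = Wh * Mh) (y : ω → R)
    (yh : ω' → R) :
    W *ᵥ (M *ᵥ y) - Wh *ᵥ (Mh *ᵥ yh) = (W * M) *ᵥ (y - H *ᵥ yh) := by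
  rw [mulVec_sub, mulVec_mulVec, mulVec_mulVec, mulVec_mulVec, hWMH]

theorem hasFDerivAt_sum_mul_comp_proj {𝕜 ι : Type*} [NontriviallyNormedField 𝕜] [Fintype ι]
    {E E' : ι → Type*} [∀ i, NormedAddCommGroup (E i)] [∀ i, NormedSpace 𝕜 (E i)]
    [∀ i, NormedAddCommGroup (E' i)] [∀ i, NormedSpace 𝕜 (E' i)] {V : ∀ i, E i → E' i → 𝕜}
    (μ : ι → 𝕜) {x : ∀ i, E i} {xh : ∀ i, E' i}
    (hV : ∀ i, DifferentiableAt 𝕜 (fun z : E i × E' i => V i z.1 z.2) (x i, xh i)) :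
    HasFDerivAt (fun z : (∀ i, E i) × (∀ i, E' i) => ∑ i, μ i * V i (z.1 i) (z.2 i))
      (∑ i, μ i • (fderiv 𝕜 (fun z : E i × E' i => V i z.1 z.2) (x i, xh i)).comp
        ((ContinuousLinearMap.proj i).prodMap (ContinuousLinearMap.proj i))) (x, xh) :=
  HasFDerivAt.fun_sum fun i _ => ((hV i).hasFDerivAt.comp (x, xh)
    ((ContinuousLinearMap.proj (R := 𝕜) (φ := E) i).prodMap
      (ContinuousLinearMap.proj (R := 𝕜) (φ := E') i)).hasFDerivAt).const_mul (μ i)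

/-- A control subsystem with states in `E`, whose external input, internal input, external output
and internal output are real vectors indexed by `m`, `p`, `q₁` and `q₂`. -/
structure ControlSubsystem (E m p q₁ q₂ : Type*) where
  dyn : E → (m → ℝ) → (p → ℝ) → E
  extOut : E → q₁ → ℝ
  intOut : E → q₂ → ℝ

/-- A control system without internal signals, with states in `E`, whose input and output are real
vectors indexed by `m` and `q`. -/
structure ControlSystem (E m q : Type*) where
  dyn : E → (m → ℝ) → E
  out : E → q → ℝ

/-- The interconnection of the subsystems `S i`, where the stacked internal input is `M` times the
stacked internal output. -/
def interconnection {ι : Type*} [Fintype ι] {E m p q₁ q₂ : ι → Type*} [∀ i, Fintype (q₂ i)]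
    (S : ∀ i, ControlSubsystem (E i) (m i) (p i) (q₁ i) (q₂ i))
    (M : Matrix (Σ i, p i) (Σ i, q₂ i) ℝ) :
    ControlSystem (∀ i, E i) (Σ i, m i) (Σ i, q₁ i) where
  dyn x u i := (S i).dyn (x i) (block u i) (block (M *ᵥ stack fun j => (S j).intOut (x j)) i)
  out x := stack fun i => (S i).extOut (x i)

/-- `V` is a storage function from the abstraction `A` to the subsystem `S`: it dominates the
external output mismatch and, for a suitable choice of `u`, dissipates up to the supply rate of the
internal mismatch. The supply matrix `X` is an arbitrary square matrix. -/
structure IsStorageFunction {E E' m m' p p' q₁ q₂ q₂' r : Type*}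
    [NormedAddCommGroup E] [NormedSpace ℝ E] [NormedAddCommGroup E'] [NormedSpace ℝ E']
    [Fintype m'] [Fintype p] [Fintype p'] [Fintype q₁] [Fintype q₂] [Fintype q₂'] [Fintype r]
    (S : ControlSubsystem E m p q₁ q₂) (A : ControlSubsystem E' m' p' q₁ q₂')
    (V : E → E' → ℝ) (α η ρ : ℝ → ℝ) (W : Matrix r p ℝ) (Wh : Matrix r p' ℝ)
    (H : Matrix q₂ q₂' ℝ) (X : Matrix (r ⊕ q₂) (r ⊕ q₂) ℝ) : Prop where
  differentiable : Differentiable ℝ fun z : E × E' => V z.1 z.2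
  isKInf_α : IsKInf α
  isKInf_η : IsKInf η
  isKInfOrZero_ρ : IsKInfOrZero ρ
  le_of_extOut : ∀ x xh, α (euclNorm (S.extOut x - A.extOut xh)) ≤ V x xh
  dissipation : ∀ x xh uh, ∃ u, ∀ w wh,
    fderiv ℝ (fun z : E × E' => V z.1 z.2) (x, xh) (S.dyn x u w, A.dyn xh uh wh) ≤
      -η (V x xh) + ρ (euclNorm uh) +
        supplyRate X (W *ᵥ w - Wh *ᵥ wh) (S.intOut x - H *ᵥ A.intOut xh)

/-- `V` is a simulation function from the abstraction `A` to the system `S`, with comparison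
functions `α`, `η` and `ρ`. -/
structure IsSimulationFunction {E E' m m' q : Type*}
    [NormedAddCommGroup E] [NormedSpace ℝ E] [NormedAddCommGroup E'] [NormedSpace ℝ E']
    [Fintype m'] [Fintype q] (S : ControlSystem E m q) (A : ControlSystem E' m' q)
    (V : E → E' → ℝ) (α η ρ : ℝ → ℝ) : Prop where
  differentiable : Differentiable ℝ fun z : E × E' => V z.1 z.2
  isKInf_α : IsKInf α
  isKInf_η : IsKInf η
  isKInfOrZero_ρ : IsKInfOrZero ρ
  le_of_out : ∀ x xh, α (euclNorm (S.out x - A.out xh)) ≤ V x xh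
  decay : ∀ x xh uh, ∃ u,
    fderiv ℝ (fun z : E × E' => V z.1 z.2) (x, xh) (S.dyn x u, A.dyn xh uh) ≤
      -η (V x xh) + ρ (euclNorm uh)

theorem IsStorageFunction.nonneg {E E' m m' p p' q₁ q₂ q₂' r : Type*}
    [NormedAddCommGroup E] [NormedSpace ℝ E] [NormedAddCommGroup E'] [NormedSpace ℝ E']
    [Fintype m'] [Fintype p] [Fintype p'] [Fintype q₁] [Fintype q₂] [Fintype q₂'] [Fintype r]
    {S : ControlSubsystem E m p q₁ q₂} {A : ControlSubsystem E' m' p' q₁ q₂'}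
    {V : E → E' → ℝ} {α η ρ : ℝ → ℝ} {W : Matrix r p ℝ} {Wh : Matrix r p' ℝ}
    {H : Matrix q₂ q₂' ℝ} {X : Matrix (r ⊕ q₂) (r ⊕ q₂) ℝ}
    (hV : IsStorageFunction S A V α η ρ W Wh H X) (x : E) (xh : E') : 0 ≤ V x xh :=
  (hV.isKInf_α.nonneg (euclNorm_nonneg _)).trans (hV.le_of_extOut x xh)

section Interconnection

variable {ι : Type*} [Fintype ι] {E E' m m' p p' q₁ q₂ q₂' r : ι → Type*}
  [∀ i, NormedAddCommGroup (E i)] [∀ i, NormedSpace ℝ (E i)]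
  [∀ i, NormedAddCommGroup (E' i)] [∀ i, NormedSpace ℝ (E' i)]
  [∀ i, Fintype (m' i)] [∀ i, Fintype (p i)] [∀ i, Fintype (p' i)] [∀ i, Fintype (q₁ i)]
  [∀ i, Fintype (q₂ i)] [∀ i, Fintype (q₂' i)] [∀ i, Fintype (r i)]
  {S : ∀ i, ControlSubsystem (E i) (m i) (p i) (q₁ i) (q₂ i)}
  {A : ∀ i, ControlSubsystem (E' i) (m' i) (p' i) (q₁ i) (q₂' i)}
  {V : ∀ i, E i → E' i → ℝ} {α η ρ : ι → ℝ → ℝ}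
  {W : ∀ i, Matrix (r i) (p i) ℝ} {Wh : ∀ i, Matrix (r i) (p' i) ℝ}
  {H : ∀ i, Matrix (q₂ i) (q₂' i) ℝ} {X : ∀ i, Matrix (r i ⊕ q₂ i) (r i ⊕ q₂ i) ℝ}
  {μ : ι → ℝ} {M : Matrix (Σ i, p i) (Σ i, q₂ i) ℝ} {Mh : Matrix (Σ i, p' i) (Σ i, q₂' i) ℝ}

theorem sum_mul_supplyRate_coupled_nonpos [DecidableEq ι] [∀ i, DecidableEq (q₂ i)]
    (hLMI : SatisfiesCouplingLMI (blockDiagonal' W * M) (weightedBlockMatrix μ X))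
    (hWMH : blockDiagonal' W * M * blockDiagonal' H = blockDiagonal' Wh * Mh)
    (y : ∀ i, q₂ i → ℝ) (yh : ∀ i, q₂' i → ℝ) :
    ∑ i, μ i * supplyRate (X i)
      (W i *ᵥ block (M *ᵥ stack y) i - Wh i *ᵥ block (Mh *ᵥ stack yh) i)
      (y i - H i *ᵥ yh i) ≤ 0 := by
  set e := stack y - blockDiagonal' H *ᵥ stack yh
  have hout (i : ι) : y i - H i *ᵥ yh i = block e i :=
    congrArg (y i - ·) (block_blockDiagonal'_mulVec H (stack yh) i).symm
  have hin (i : ι) : W i *ᵥ block (M *ᵥ stack y) i - Wh i *ᵥ block (Mh *ᵥ stack yh) i =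
      block ((blockDiagonal' W * M) *ᵥ e) i := by
    rw [← mulVec_sub_mulVec_eq_of_mul_eq hWMH, ← block_blockDiagonal'_mulVec,
      ← block_blockDiagonal'_mulVec]
    rfl
  simp only [hout, hin]
  rw [← supplyRate_weightedBlockMatrix]
  exact hLMI.supplyRate_mulVec_self_nonpos e

theorem exists_isKInf_map_euclNorm_interconnection_le [Nonempty ι]
    (hV : ∀ i, IsStorageFunction (S i) (A i) (V i) (α i) (η i) (ρ i) (W i) (Wh i) (H i) (X i))
    (hμ : ∀ i, 0 < μ i) :
    ∃ αc, IsKInf αc ∧ ∀ x xh,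
      αc (euclNorm ((interconnection S M).out x - (interconnection A Mh).out xh)) ≤
        ∑ i, μ i * V i (x i) (xh i) := by
  obtain ⟨αc, hαc, hle⟩ :=
    IsKInf.exists_map_sum_le_sum fun i => (hV i).isKInf_α.const_mul (hμ i)
  refine ⟨αc, hαc, fun x xh => ?_⟩
  let d i := (S i).extOut (x i) - (A i).extOut (xh i)
  calc αc (euclNorm (stack d))
      ≤ αc (∑ i, euclNorm (d i)) :=
        hαc.monotoneOn (euclNorm_nonneg _) (Finset.sum_nonneg fun i _ => euclNorm_nonneg (d i))
          (euclNorm_stack_le_sum d)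
    _ ≤ ∑ i, μ i * α i (euclNorm (d i)) := hle _ fun i => euclNorm_nonneg (d i)
    _ ≤ ∑ i, μ i * V i (x i) (xh i) :=
        Finset.sum_le_sum fun i _ =>
          mul_le_mul_of_nonneg_left ((hV i).le_of_extOut (x i) (xh i)) (hμ i).le

theorem exists_fderiv_interconnection_le [DecidableEq ι] [∀ i, DecidableEq (q₂ i)]
    (hV : ∀ i, IsStorageFunction (S i) (A i) (V i) (α i) (η i) (ρ i) (W i) (Wh i) (H i) (X i))
    (hμ : ∀ i, 0 < μ i)
    (hLMI : SatisfiesCouplingLMI (blockDiagonal' W * M) (weightedBlockMatrix μ X))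
    (hWMH : blockDiagonal' W * M * blockDiagonal' H = blockDiagonal' Wh * Mh)
    (x : ∀ i, E i) (xh : ∀ i, E' i) (uh : (Σ i, m' i) → ℝ) :
    ∃ u, fderiv ℝ (fun z : (∀ i, E i) × (∀ i, E' i) => ∑ i, μ i * V i (z.1 i) (z.2 i)) (x, xh)
        ((interconnection S M).dyn x u, (interconnection A Mh).dyn xh uh) ≤
      -∑ i, μ i * η i (V i (x i) (xh i)) + ∑ i, μ i * ρ i (euclNorm (block uh i)) := by
  choose u hu using fun i => (hV i).dissipation (x i) (xh i) (block uh i)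
  refine ⟨stack u, ?_⟩
  let y i := (S i).intOut (x i)
  let yh i := (A i).intOut (xh i)
  let w i := block (M *ᵥ stack y) i
  let wh i := block (Mh *ᵥ stack yh) i
  let s i := supplyRate (X i) (W i *ᵥ w i - Wh i *ᵥ wh i) (y i - H i *ᵥ yh i)
  have hsupply : ∑ i, μ i * s i ≤ 0 := sum_mul_supplyRate_coupled_nonpos hLMI hWMH y yh
  rw [(hasFDerivAt_sum_mul_comp_proj μ fun i => (hV i).differentiable _).fderiv,
    _root_.sum_apply]
  calc ∑ i, μ i * fderiv ℝ (fun z : E i × E' i => V i z.1 z.2) (x i, xh i)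
        ((S i).dyn (x i) (u i) (w i), (A i).dyn (xh i) (block uh i) (wh i))
      ≤ ∑ i, μ i * (-η i (V i (x i) (xh i)) + ρ i (euclNorm (block uh i)) + s i) :=
        Finset.sum_le_sum fun i _ => mul_le_mul_of_nonneg_left (hu i (w i) (wh i)) (hμ i).le
    _ = -∑ i, μ i * η i (V i (x i) (xh i)) + ∑ i, μ i * ρ i (euclNorm (block uh i)) +
          ∑ i, μ i * s i := by
        simp only [mul_add, mul_neg, Finset.sum_add_distrib, Finset.sum_neg_distrib]
    _ ≤ _ := add_le_of_nonpos_right hsupply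

theorem stmt_0_general [Nonempty ι] [DecidableEq ι] [∀ i, DecidableEq (q₂ i)]
    (hV : ∀ i, IsStorageFunction (S i) (A i) (V i) (α i) (η i) (ρ i) (W i) (Wh i) (H i) (X i))
    (hμ : ∀ i, 0 < μ i)
    (hLMI : SatisfiesCouplingLMI (blockDiagonal' W * M) (weightedBlockMatrix μ X))
    (hWMH : blockDiagonal' W * M * blockDiagonal' H = blockDiagonal' Wh * Mh) :
    ∃ αc ηc ρc, IsSimulationFunction (interconnection S M) (interconnection A Mh)
      (fun x xh => ∑ i, μ i * V i (x i) (xh i)) αc ηc ρc := by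
  obtain ⟨αc, hαc, hout⟩ :=
    exists_isKInf_map_euclNorm_interconnection_le (M := M) (Mh := Mh) hV hμ
  obtain ⟨ηc, hηc, hηle⟩ := IsKInf.exists_map_sum_mul_le_sum_mul (fun i => (hV i).isKInf_η) hμ
  obtain ⟨ρc, hρc, hleρ⟩ :=
    IsKInfOrZero.exists_sum_le_map fun i => (hV i).isKInfOrZero_ρ.const_mul (hμ i)
  refine ⟨αc, ηc, ρc, ?_, hαc, hηc, hρc, hout, fun x xh uh => ?_⟩
  · exact fun z =>
      (hasFDerivAt_sum_mul_comp_proj μ fun i => (hV i).differentiable _).differentiableAt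
  · obtain ⟨u, hu⟩ := exists_fderiv_interconnection_le hV hμ hLMI hWMH x xh uh
    refine ⟨u, hu.trans (add_le_add (neg_le_neg ?_) ?_)⟩
    · exact hηle _ fun i => (hV i).nonneg (x i) (xh i)
    · exact hleρ _ _ (fun i => euclNorm_nonneg _) (euclNorm_block_le uh)

end Interconnection

/-- Theorem 4.2, compositionality: if each subsystem `Σᵢ` admits an
abstraction `Σ̂ᵢ` with storage function `Vᵢ`, and the dissipativity-type compositionality
conditions (5) and (6) hold for some `μᵢ > 0` and coupling matrices `M`, `M̂`, then
`V(x,x̂) = Σᵢ μᵢ Vᵢ(xᵢ,x̂ᵢ)` is a simulation function from the interconnection of the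
abstractions to the interconnection of the concrete subsystems. -/
theorem stmt_0
    (N : ℕ) (hN : 1 ≤ N)
    -- dimensions of the subsystems and of their abstractions
    (n m p q1 q2 r n' m' p' q2' : Fin N → ℕ)
    -- the concrete subsystems Σᵢ
    (f : ∀ i, (Fin (n i) → ℝ) → (Fin (m i) → ℝ) → (Fin (p i) → ℝ) → (Fin (n i) → ℝ))
    (h1 : ∀ i, (Fin (n i) → ℝ) → (Fin (q1 i) → ℝ))
    (h2 : ∀ i, (Fin (n i) → ℝ) → (Fin (q2 i) → ℝ))
    -- the abstractions Σ̂ᵢ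
    (fh : ∀ i, (Fin (n' i) → ℝ) → (Fin (m' i) → ℝ) → (Fin (p' i) → ℝ) → (Fin (n' i) → ℝ))
    (h1h : ∀ i, (Fin (n' i) → ℝ) → (Fin (q1 i) → ℝ))
    (h2h : ∀ i, (Fin (n' i) → ℝ) → (Fin (q2' i) → ℝ))
    -- the storage functions Vᵢ from Σ̂ᵢ to Σᵢ, with their associated data
    (V : ∀ i, (Fin (n i) → ℝ) → (Fin (n' i) → ℝ) → ℝ)
    (hVC1 : ∀ i, ContDiff ℝ 1
      (fun z : (Fin (n i) → ℝ) × (Fin (n' i) → ℝ) => V i z.1 z.2))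
    (hVnonneg : ∀ i x xh, 0 ≤ V i x xh)
    (α η ρ : ∀ _ : Fin N, ℝ → ℝ)
    (hα : ∀ i, IsKInf (α i)) (hη : ∀ i, IsKInf (η i))
    (hρ : ∀ i, IsKInf (ρ i) ∨ ρ i = 0)
    (W : ∀ i, Matrix (Fin (r i)) (Fin (p i)) ℝ)
    (Wh : ∀ i, Matrix (Fin (r i)) (Fin (p' i)) ℝ)
    (H : ∀ i, Matrix (Fin (q2 i)) (Fin (q2' i)) ℝ)
    (X : ∀ i, Matrix (Fin (r i) ⊕ Fin (q2 i)) (Fin (r i) ⊕ Fin (q2 i)) ℝ)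
    (hXsym : ∀ i, (X i).IsSymm)
    (hX22 : ∀ i, (-(X i).toBlocks₂₂).PosSemidef)
    (hsf1 : ∀ i x xh, α i (euclNorm (h1 i x - h1h i xh)) ≤ V i x xh)
    (hsf2 : ∀ i x xh uh, ∃ u, ∀ w wh,
      fderiv ℝ (fun z : (Fin (n i) → ℝ) × (Fin (n' i) → ℝ) => V i z.1 z.2) (x, xh)
          (f i x u w, fh i xh uh wh) ≤
        -(η i (V i x xh)) + ρ i (euclNorm uh) +
          (Sum.elim ((W i).mulVec w - (Wh i).mulVec wh)
              (h2 i x - (H i).mulVec (h2h i xh))) ⬝ᵥ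
            (X i).mulVec
              (Sum.elim ((W i).mulVec w - (Wh i).mulVec wh)
                (h2 i x - (H i).mulVec (h2h i xh))))
    -- the coefficients μᵢ > 0 and the coupling matrices M, M̂
    (μ : Fin N → ℝ) (hμ : ∀ i, 0 < μ i)
    (M : Matrix ((i : Fin N) × Fin (p i)) ((i : Fin N) × Fin (q2 i)) ℝ)
    (Mh : Matrix ((i : Fin N) × Fin (p' i)) ((i : Fin N) × Fin (q2' i)) ℝ)
    -- the compositionality condition (5): [WM; I]ᵀ X(μ₁X₁,…,μ_N X_N) [WM; I] ⪯ 0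
    (hLMI :
      (-((Matrix.fromRows (Matrix.blockDiagonal' W * M)
            (1 : Matrix ((i : Fin N) × Fin (q2 i)) ((i : Fin N) × Fin (q2 i)) ℝ))ᵀ *
          Matrix.fromBlocks
            (Matrix.blockDiagonal' fun i => μ i • (X i).toBlocks₁₁)
            (Matrix.blockDiagonal' fun i => μ i • (X i).toBlocks₁₂)
            (Matrix.blockDiagonal' fun i => μ i • (X i).toBlocks₂₁)
            (Matrix.blockDiagonal' fun i => μ i • (X i).toBlocks₂₂) *
          Matrix.fromRows (Matrix.blockDiagonal' W * M)
            (1 : Matrix ((i : Fin N) × Fin (q2 i)) ((i : Fin N) × Fin (q2 i)) ℝ))).PosSemidef)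
    -- the compositionality condition (6): W M H = Ŵ M̂
    (hWMH : Matrix.blockDiagonal' W * M * Matrix.blockDiagonal' H =
      Matrix.blockDiagonal' Wh * Mh) :
    -- conclusion: V(x,x̂) = Σᵢ μᵢ Vᵢ(xᵢ,x̂ᵢ) is a simulation function from
    -- Σ̂ = I(Σ̂₁,…,Σ̂_N) (coupled by M̂) to Σ = I(Σ₁,…,Σ_N) (coupled by M)
    ∃ αc ηc ρc : ℝ → ℝ,
      IsKInf αc ∧ IsKInf ηc ∧ (IsKInf ρc ∨ ρc = 0) ∧
      (∀ (x : ∀ i, Fin (n i) → ℝ) (xh : ∀ i, Fin (n' i) → ℝ),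
        αc (euclNorm (fun j : (i : Fin N) × Fin (q1 i) =>
            h1 j.1 (x j.1) j.2 - h1h j.1 (xh j.1) j.2)) ≤
          ∑ i, μ i * V i (x i) (xh i)) ∧
      (∀ (x : ∀ i, Fin (n i) → ℝ) (xh : ∀ i, Fin (n' i) → ℝ)
          (uh : ∀ i, Fin (m' i) → ℝ),
        ∃ u : ∀ i, Fin (m i) → ℝ,
          fderiv ℝ
              (fun z : (∀ i, Fin (n i) → ℝ) × (∀ i, Fin (n' i) → ℝ) =>
                ∑ i, μ i * V i (z.1 i) (z.2 i))
              (x, xh)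
              (fun i => f i (x i) (u i)
                  (fun j => M.mulVec (fun a => h2 a.1 (x a.1) a.2) ⟨i, j⟩),
               fun i => fh i (xh i) (uh i)
                  (fun j => Mh.mulVec (fun a => h2h a.1 (xh a.1) a.2) ⟨i, j⟩)) ≤
            -(ηc (∑ i, μ i * V i (x i) (xh i))) +
              ρc (euclNorm (fun a : (i : Fin N) × Fin (m' i) => uh a.1 a.2))) := by
  have : NeZero N := ⟨Nat.one_le_iff_ne_zero.1 hN⟩
  obtain ⟨αc, ηc, ρc, hsim⟩ := stmt_0_general
    (S := fun i => ⟨f i, h1 i, h2 i⟩) (A := fun i => ⟨fh i, h1h i, h2h i⟩)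
    (fun i => ⟨(hVC1 i).differentiable one_ne_zero, hα i, hη i, hρ i, hsf1 i, hsf2 i⟩)
    hμ hLMI hWMH
  refine ⟨αc, ηc, ρc, hsim.isKInf_α, hsim.isKInf_η, hsim.isKInfOrZero_ρ, hsim.le_of_out,
    fun x xh uh => ?_⟩
  obtain ⟨u, hu⟩ := hsim.decay x xh (stack uh)
  exact ⟨block u, hu⟩
end

section
/- Let A ∈ ℝ^{n×n}, B ∈ ℝ^{n×m}, and P ∈ ℝ^{n×n̂}. There exist matrices Â ∈ ℝ^{n̂×n̂} and Q ∈ ℝ^{m×n̂} such that AP = PÂ − BQ if and only if im(AP) ⊆ im P + im B, where im P + im B is the sum of the column spaces of P and B. -/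
/-!
`im P + im B` is the column space of the block matrix `[P B]`, and the column space of `M` lies in
that of `N` exactly when `M = N * X` for some `X`: column `j` of `X` holds the coefficients that
express column `j` of `M` through the columns of `N`. With `M = A * P` and `N = [P B]`, the two
row blocks of `X` are `Â` and `-Q`.
-/

open Matrix

section CommSemiring

variable {R n p m k : Type*} [CommSemiring R] [Fintype p] [Fintype m] [Fintype k]

theorem range_mulVecLin_fromCols (P : Matrix n p R) (B : Matrix n m R) :
    LinearMap.range (fromCols P B).mulVecLin =
      LinearMap.range P.mulVecLin ⊔ LinearMap.range B.mulVecLin := by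
  have col_eq : (fromCols P B).col = Sum.elim P.col B.col := by
    ext (_ | _) <;> rfl
  simp only [range_mulVecLin, col_eq, Set.Sum.elim_range, Submodule.span_union]

theorem exists_eq_mul_iff_range_mulVecLin_le (M : Matrix n k R) (N : Matrix n p R) :
    (∃ X : Matrix p k R, M = N * X) ↔
      LinearMap.range M.mulVecLin ≤ LinearMap.range N.mulVecLin := by
  constructor
  · rintro ⟨X, rfl⟩
    rw [mulVecLin_mul]
    exact LinearMap.range_comp_le_range _ _
  · intro h
    rw [range_mulVecLin M, Submodule.span_le, Set.range_subset_iff] at h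
    choose x hx using h
    exact ⟨(of x)ᵀ, ext_col fun j ↦ (hx j).symm⟩

theorem exists_eq_mul_add_mul_iff_range_mulVecLin_le_sup (M : Matrix n k R) (P : Matrix n p R)
    (B : Matrix n m R) :
    (∃ (X : Matrix p k R) (Y : Matrix m k R), M = P * X + B * Y) ↔
      LinearMap.range M.mulVecLin ≤
        LinearMap.range P.mulVecLin ⊔ LinearMap.range B.mulVecLin := by
  rw [← range_mulVecLin_fromCols, ← exists_eq_mul_iff_range_mulVecLin_le]
  constructor
  · rintro ⟨X, Y, h⟩
    exact ⟨fromRows X Y, by rw [h, fromCols_mul_fromRows]⟩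
  · rintro ⟨Z, h⟩
    exact ⟨Z.toRows₁, Z.toRows₂, by rw [h, ← fromCols_mul_fromRows, fromRows_toRows]⟩

end CommSemiring

theorem stmt_3_general {R n p m k : Type*} [CommRing R] [Fintype p] [Fintype m] [Fintype k]
    (M : Matrix n k R) (P : Matrix n p R) (B : Matrix n m R) :
    (∃ (X : Matrix p k R) (Q : Matrix m k R), M = P * X - B * Q) ↔
      LinearMap.range M.mulVecLin ≤
        LinearMap.range P.mulVecLin ⊔ LinearMap.range B.mulVecLin := by
  rw [← exists_eq_mul_add_mul_iff_range_mulVecLin_le_sup]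
  refine exists_congr fun X ↦ (Equiv.neg (Matrix m k R)).exists_congr fun Q ↦ ?_
  rw [Equiv.neg_apply, Matrix.mul_neg, sub_eq_add_neg]

/-- `A * P = P * Â - B * Q` solvable iff `im (A * P) ⊆ im P + im B`. -/
theorem stmt_3 {n m n' : ℕ} (A : Matrix (Fin n) (Fin n) ℝ) (B : Matrix (Fin n) (Fin m) ℝ)
    (P : Matrix (Fin n) (Fin n') ℝ) :
    (∃ (Ahat : Matrix (Fin n') (Fin n') ℝ) (Q : Matrix (Fin m) (Fin n') ℝ),
        A * P = P * Ahat - B * Q) ↔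
      LinearMap.range (A * P).mulVecLin ≤
        LinearMap.range P.mulVecLin ⊔ LinearMap.range B.mulVecLin :=
  stmt_3_general (A * P) P B
end

section
/- Let C₁ ∈ ℝ^{q₁×n} and let P ∈ ℝ^{n×n̂} be injective (i.e., of full column rank n̂), and set Ĉ₁ = C₁P. There exist matrices P̂ ∈ ℝ^{n̂×n}, G ∈ ℝ^{n×g}, and T ∈ ℝ^{g×n} (for some g) such that C₁ = Ĉ₁P̂, Iₙ = PP̂ + GT, and I_{n̂} = P̂P, if and only if im P + ker C₁ = ℝⁿ. -/
/-!
A factorization `C₁ = C₁ P X` exists iff `C₁` and `C₁ P` have the same image, that is, iff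
`im P + ker C₁` is everything. Given such an `X` and a left inverse `L` of `P`, the matrix
`P̂ = L + X (1 - P L)` is again a left inverse of `P` and still satisfies `C₁ = C₁ P P̂`. The
equation `1 = P P̂ + G T` is no constraint, since every matrix is a product `G T`.
-/

section

open Matrix

variable {R K k l m n : Type*} [Fintype n]

theorem exists_mul_eq_iff_range_mulVecLin_le [CommSemiring R] [Fintype k]
    (A : Matrix m n R) (B : Matrix m k R) :
    (∃ X : Matrix n k R, A * X = B) ↔
      LinearMap.range B.mulVecLin ≤ LinearMap.range A.mulVecLin := by
  classical
  constructor
  · rintro ⟨X, rfl⟩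
    rw [mulVecLin_mul]
    exact LinearMap.range_comp_le_range _ _
  · intro hrange
    have col_mem (j : k) : ∃ x, A *ᵥ x = B.col j :=
      hrange ⟨Pi.single j 1, mulVec_single_one B j⟩
    choose x hx using col_mem
    exact ⟨(of x)ᵀ, ext_col hx⟩

theorem exists_mul_mul_eq_self_iff_range_sup_ker_eq_top [CommRing R] [Fintype k]
    (C : Matrix m n R) (P : Matrix n k R) :
    (∃ X : Matrix k n R, C * P * X = C) ↔
      LinearMap.range P.mulVecLin ⊔ LinearMap.ker C.mulVecLin = ⊤ := by
  have hle : LinearMap.range (C * P).mulVecLin ≤ LinearMap.range C.mulVecLin :=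
    (exists_mul_eq_iff_range_mulVecLin_le C (C * P)).1 ⟨P, rfl⟩
  rw [exists_mul_eq_iff_range_mulVecLin_le, hle.ge_iff_eq, mulVecLin_mul,
    LinearMap.range_comp, Submodule.map_eq_range_iff, codisjoint_iff]

theorem exists_left_inverse_of_mulVecLin_injective [Field K] [Fintype m] [DecidableEq n]
    {P : Matrix m n K} (hP : Function.Injective P.mulVecLin) :
    ∃ L : Matrix n m K, L * P = 1 := by
  classical
  obtain ⟨f, hf⟩ := P.mulVecLin.exists_leftInverse_of_injective (LinearMap.ker_eq_bot.2 hP)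
  refine ⟨f.toMatrix', toLin'.injective ?_⟩
  rw [toLin'_mul, toLin'_toMatrix', toLin'_one, toLin'_apply', hf]

theorem exists_mul_eq_and_mul_eq_of_left_inverse [Ring R] [Fintype m] [Finite l] [DecidableEq l]
    {A : Matrix k n R} {B : Matrix k m R} {P : Matrix m l R} {D : Matrix n l R}
    (hP : ∃ L : Matrix l m R, L * P = 1) (hA : ∃ X : Matrix n m R, A * X = B)
    (hcompat : A * D = B * P) :
    ∃ Q : Matrix n m R, A * Q = B ∧ Q * P = D := by
  classical
  have := Fintype.ofFinite l
  obtain ⟨L, hL⟩ := hP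
  obtain ⟨X, hX⟩ := hA
  refine ⟨D * L + X * (1 - P * L), ?_, ?_⟩
  · calc A * (D * L + X * (1 - P * L))
        = A * D * L + A * X * (1 - P * L) := by simp only [Matrix.mul_add, Matrix.mul_assoc]
      _ = B * P * L + B * (1 - P * L) := by rw [hcompat, hX]
      _ = B := by rw [Matrix.mul_sub, Matrix.mul_one, Matrix.mul_assoc, add_sub_cancel]
  · calc (D * L + X * (1 - P * L)) * P
        = D * (L * P) + X * (P - P * (L * P)) := by
          simp only [Matrix.add_mul, Matrix.sub_mul, Matrix.one_mul, Matrix.mul_assoc]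
      _ = D := by rw [hL, Matrix.mul_one, Matrix.mul_one, sub_self, Matrix.mul_zero, add_zero]

theorem exists_eq_mul_fin [Semiring R] [Finite k] (M : Matrix m k R) :
    ∃ (g : ℕ) (G : Matrix m (Fin g) R) (T : Matrix (Fin g) k R), M = G * T := by
  classical
  have := Fintype.ofFinite k
  let e := (Finite.equivFin k).symm
  refine ⟨Nat.card k, M.submatrix id e, (1 : Matrix k k R).submatrix e id, ?_⟩
  rw [submatrix_mul_equiv, Matrix.mul_one, submatrix_id_id]

theorem stmt_7_general [CommRing R] [Fintype k] [DecidableEq k] [DecidableEq n]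
    (C : Matrix m n R) (P : Matrix n k R) (hP : ∃ L : Matrix k n R, L * P = 1) :
    (∃ (g : ℕ) (Q : Matrix k n R) (G : Matrix n (Fin g) R) (T : Matrix (Fin g) n R),
        C = (C * P) * Q ∧ (1 : Matrix n n R) = P * Q + G * T ∧
          (1 : Matrix k k R) = Q * P) ↔
      LinearMap.range P.mulVecLin ⊔ LinearMap.ker C.mulVecLin = ⊤ := by
  rw [← exists_mul_mul_eq_self_iff_range_sup_ker_eq_top]
  constructor
  · rintro ⟨-, Q, -, -, hC, -, -⟩
    exact ⟨Q, hC.symm⟩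
  · intro hC
    obtain ⟨Q, hCQ, hQP⟩ :=
      exists_mul_eq_and_mul_eq_of_left_inverse hP hC (Matrix.mul_one (C * P))
    obtain ⟨g, G, T, hGT⟩ := exists_eq_mul_fin (1 - P * Q)
    exact ⟨g, Q, G, T, hCQ.symm, by rw [← hGT, add_sub_cancel], hQP.symm⟩

end

/-- existence of `P̂`, `G`, `T` with `C₁ = Ĉ₁ P̂`, `Iₙ = P P̂ + G T`,
`I_{n̂} = P̂ P` (where `Ĉ₁ = C₁ P`) iff `im P + ker C₁ = ℝⁿ`. -/
theorem stmt_7 {n n' q1 : ℕ} (C1 : Matrix (Fin q1) (Fin n) ℝ)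
    (P : Matrix (Fin n) (Fin n') ℝ) (hP : Function.Injective P.mulVecLin) :
    (∃ (g : ℕ) (Phat : Matrix (Fin n') (Fin n) ℝ) (G : Matrix (Fin n) (Fin g) ℝ)
        (T : Matrix (Fin g) (Fin n) ℝ),
        C1 = (C1 * P) * Phat ∧ (1 : Matrix (Fin n) (Fin n) ℝ) = P * Phat + G * T ∧
          (1 : Matrix (Fin n') (Fin n') ℝ) = Phat * P) ↔
      LinearMap.range P.mulVecLin ⊔ LinearMap.ker C1.mulVecLin = ⊤ :=
  stmt_7_general C1 P (exists_left_inverse_of_mulVecLin_injective hP)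
end

section
/- Let M̂ ∈ ℝ^{n×n} be symmetric, let A ∈ ℝ^{n×n}, B ∈ ℝ^{n×m}, K ∈ ℝ^{m×n}, L₁ ∈ ℝ^{m×1}, E ∈ ℝ^{n×1}, F ∈ ℝ^{1×n}, and let b > 0. Then the symmetric (n+1)×(n+1) block matrix [[(A+BK)ᵀM̂ + M̂(A+BK), M̂(BL₁+E) + Fᵀ], [(BL₁+E)ᵀM̂ + F, −2/b]] is negative definite if and only if (A + BK + (b/2)(BL₁+E)F)ᵀM̂ + M̂(A + BK + (b/2)(BL₁+E)F) + (b/2)·M̂(BL₁+E)(BL₁+E)ᵀM̂ + (b/2)·FᵀF is negative definite. -/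
open Matrix

/-- A symmetric real matrix is negative definite: `vᵀ S v < 0` for all nonzero `v`. -/
def Matrix.NegDef {ι : Type*} [Fintype ι] (S : Matrix ι ι ℝ) : Prop :=
  ∀ v : ι → ℝ, v ≠ 0 → v ⬝ᵥ S.mulVec v < 0

/-!
The block matrix is congruent, through a unipotent block-triangular matrix, to the block-diagonal
matrix formed by its Schur complement and its lower right block. Negative definiteness is invariant
under congruence and is tested blockwise on block-diagonal matrices. For the lower right block
`-(2 / b) I` the Schur complement adds `b / 2` times a Gram matrix, whose expansion is the second
matrix of the equivalence.
-/

section NegativeDefinite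

variable {m n : Type*} [Fintype m] [Fintype n]

theorem dotProduct_transpose_mul_mul_mulVec {R : Type*} [CommSemiring R]
    (S : Matrix m m R) (U : Matrix m n R) (v : n → R) :
    v ⬝ᵥ (Uᵀ * S * U) *ᵥ v = U *ᵥ v ⬝ᵥ S *ᵥ (U *ᵥ v) := by
  rw [← mulVec_mulVec, ← mulVec_mulVec, dotProduct_mulVec, vecMul_transpose]

theorem negDef_transpose_mul_mul_iff [DecidableEq n] {S U : Matrix n n ℝ} (hU : IsUnit U) :
    (Uᵀ * S * U).NegDef ↔ S.NegDef := by
  have hinj : Function.Injective U.mulVec := mulVec_injective_iff_isUnit.mpr hU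
  have hsurj : Function.Surjective U.mulVec := mulVec_surjective_iff_isUnit.mpr hU
  have hS : S.NegDef ↔ ∀ v, U *ᵥ v ≠ 0 → U *ᵥ v ⬝ᵥ S *ᵥ (U *ᵥ v) < 0 := hsurj.forall
  rw [hS]
  simp only [NegDef, dotProduct_transpose_mul_mul_mulVec, ne_eq, hinj.eq_iff' (mulVec_zero U)]

theorem isUnit_of_negDef [DecidableEq n] {S : Matrix n n ℝ} (hS : S.NegDef) : IsUnit S := by
  rw [isUnit_iff_isUnit_det, isUnit_iff_ne_zero, ne_eq, ← exists_mulVec_eq_zero_iff]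
  rintro ⟨v, hv, hSv⟩
  simpa [hSv] using hS v hv

theorem negDef_smul_one [DecidableEq n] {c : ℝ} (hc : c < 0) :
    (c • (1 : Matrix n n ℝ)).NegDef := by
  intro v hv
  rw [smul_mulVec, one_mulVec, dotProduct_smul, smul_eq_mul]
  exact mul_neg_of_neg_of_pos hc (dotProduct_self_star_pos_iff.mpr hv)

theorem dotProduct_fromBlocks_zero_zero_mulVec {R : Type*} [NonUnitalNonAssocSemiring R]
    (P : Matrix m m R) (D : Matrix n n R) (x : m → R) (y : n → R) :
    Sum.elim x y ⬝ᵥ fromBlocks P 0 0 D *ᵥ Sum.elim x y = x ⬝ᵥ P *ᵥ x + y ⬝ᵥ D *ᵥ y := by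
  simp [fromBlocks_mulVec, sumElim_dotProduct_sumElim]

theorem negDef_fromBlocks_zero_zero_iff {P : Matrix m m ℝ} {D : Matrix n n ℝ} :
    (fromBlocks P 0 0 D).NegDef ↔ P.NegDef ∧ D.NegDef := by
  constructor
  · intro h
    refine ⟨fun x hx => ?_, fun y hy => ?_⟩
    · simpa [dotProduct_fromBlocks_zero_zero_mulVec] using
        h (Sum.elim x 0) (by simpa [funext_iff] using hx)
    · simpa [dotProduct_fromBlocks_zero_zero_mulVec] using
        h (Sum.elim 0 y) (by simpa [funext_iff] using hy)
  · rintro ⟨hP, hD⟩ v hv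
    obtain ⟨x, y, rfl⟩ : ∃ x y, v = Sum.elim x y := ⟨_, _, (Sum.elim_comp_inl_inr v).symm⟩
    rw [dotProduct_fromBlocks_zero_zero_mulVec]
    by_cases hx : x = 0
    · have hy : y ≠ 0 := by
        rintro rfl
        exact hv (by simp [hx])
      simpa [hx] using hD y hy
    · have hy : y ⬝ᵥ D *ᵥ y ≤ 0 := by
        by_cases hy : y = 0
        · simp [hy]
        · exact (hD y hy).le
      exact add_neg_of_neg_of_nonpos (hP x hx) hy

theorem negDef_fromBlocks_iff_of_negDef₂₂ [DecidableEq n] (P : Matrix m m ℝ)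
    (C : Matrix n m ℝ) {D : Matrix n n ℝ} (hsymm : D.IsSymm) (hD : D.NegDef) :
    (fromBlocks P Cᵀ C D).NegDef ↔ (P - Cᵀ * D⁻¹ * C).NegDef := by
  classical
  let : Invertible D := (isUnit_of_negDef hD).invertible
  let U : Matrix (m ⊕ n) (m ⊕ n) ℝ := fromBlocks 1 0 (D⁻¹ * C) 1
  have hU : IsUnit U := isUnit_fromBlocks_zero₁₂.mpr ⟨isUnit_one, isUnit_one⟩
  have hcongr : fromBlocks P Cᵀ C D = Uᵀ * fromBlocks (P - Cᵀ * D⁻¹ * C) 0 0 D * U := by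
    simpa [U, fromBlocks_transpose, transpose_nonsing_inv, hsymm.eq] using
      fromBlocks_eq_of_invertible₂₂ P Cᵀ C D
  rw [hcongr, negDef_transpose_mul_mul_iff hU, negDef_fromBlocks_zero_zero_iff, and_iff_left hD]

theorem negDef_fromBlocks_smul_one_iff [DecidableEq n] (P : Matrix m m ℝ)
    (C : Matrix n m ℝ) {c : ℝ} (hc : c < 0) :
    (fromBlocks P Cᵀ C (c • 1)).NegDef ↔ (P - c⁻¹ • (Cᵀ * C)).NegDef := by
  have hinv : (c • (1 : Matrix n n ℝ))⁻¹ = c⁻¹ • 1 :=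
    inv_eq_left_inv (by simp [smul_smul, hc.ne])
  rw [negDef_fromBlocks_iff_of_negDef₂₂ P C (isSymm_one.smul c) (negDef_smul_one hc), hinv]
  simp

end NegativeDefinite

theorem of_const_eq_smul_one {ι R : Type*} [Subsingleton ι] [DecidableEq ι]
    [NonAssocSemiring R] (c : R) : (of fun _ _ => c : Matrix ι ι R) = c • 1 := by
  ext i j
  simp [Subsingleton.elim i j]

theorem lyapunov_add_smul_mul_eq {n p R : Type*} [Fintype n] [Fintype p] [CommSemiring R]
    (M A : Matrix n n R) (G : Matrix n p R) (F : Matrix p n R) (c : R) :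
    Aᵀ * M + M * A + c • ((M * G + Fᵀ) * (Gᵀ * M + F)) =
      (A + c • (G * F))ᵀ * M + M * (A + c • (G * F)) +
        c • (M * G * Gᵀ * M) + c • (Fᵀ * F) := by
  simp only [transpose_add, transpose_smul, transpose_mul, Matrix.add_mul, Matrix.mul_add,
    Matrix.smul_mul, Matrix.mul_smul, smul_add, Matrix.mul_assoc]
  abel

theorem stmt_12_general {n p : Type*} [Fintype n] [Fintype p] [DecidableEq p]
    {M : Matrix n n ℝ} (hM : M.IsSymm) (A : Matrix n n ℝ) (G : Matrix n p ℝ) (F : Matrix p n ℝ)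
    {b : ℝ} (hb : 0 < b) :
    (fromBlocks (Aᵀ * M + M * A) (M * G + Fᵀ) (Gᵀ * M + F) ((-2 / b) • 1)).NegDef ↔
      ((A + (b / 2) • (G * F))ᵀ * M + M * (A + (b / 2) • (G * F)) +
        (b / 2) • (M * G * Gᵀ * M) + (b / 2) • (Fᵀ * F)).NegDef := by
  have htranspose : (Gᵀ * M + F)ᵀ = M * G + Fᵀ := by
    rw [transpose_add, transpose_mul, transpose_transpose, hM.eq]
  have hc : -2 / b < 0 := div_neg_of_neg_of_pos (by norm_num) hb
  have hinv : -(-2 / b)⁻¹ = b / 2 := by rw [inv_div, div_neg, neg_neg]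
  rw [← lyapunov_add_smul_mul_eq, ← htranspose, negDef_fromBlocks_smul_one_iff _ _ hc,
    sub_eq_add_neg, ← neg_smul, hinv]

/-- Schur-complement characterization of negative definiteness of the
block matrix appearing in the feasibility discussion of LMI (16) for `b < ∞`. -/
theorem stmt_12 {n m : ℕ} (M : Matrix (Fin n) (Fin n) ℝ) (hM : M.IsSymm)
    (A : Matrix (Fin n) (Fin n) ℝ) (B : Matrix (Fin n) (Fin m) ℝ)
    (K : Matrix (Fin m) (Fin n) ℝ) (L1 : Matrix (Fin m) (Fin 1) ℝ)
    (E : Matrix (Fin n) (Fin 1) ℝ) (F : Matrix (Fin 1) (Fin n) ℝ)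
    (b : ℝ) (hb : 0 < b) :
    (Matrix.fromBlocks
        ((A + B * K)ᵀ * M + M * (A + B * K))
        (M * (B * L1 + E) + Fᵀ)
        ((B * L1 + E)ᵀ * M + F)
        (Matrix.of fun _ _ => -2 / b)).NegDef ↔
      ((A + B * K + (b / 2) • ((B * L1 + E) * F))ᵀ * M +
          M * (A + B * K + (b / 2) • ((B * L1 + E) * F)) +
          (b / 2) • (M * (B * L1 + E) * (B * L1 + E)ᵀ * M) +
          (b / 2) • (Fᵀ * F)).NegDef := by
  rw [of_const_eq_smul_one]
  exact stmt_12_general hM (A + B * K) (B * L1 + E) F hb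
end
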